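/- arXiv:2102.04373 — 2 statements merged into one kernel-verified Lean document; each statement's English description precedes it below -/
import Mathlib

section
/- If LB⁰ ≤ wᵀx + b ≤ UB⁰ holds for all feasible x, with LB⁰ < 0 < UB⁰, then y = max(0, wᵀx + b) if and only if there exists σ ∈ {0,1} such that y ≥ wᵀx + b, y ≤ wᵀx + b - (1-σ)·LB⁰, y ≤ σ·UB⁰, and y ≥ 0. -/
/-- Correctness of the big-M MILP formulation of a ReLU node. -/
theorem stmt_1 (η : ℕ) (w : Fin η → ℝ) (b LB UB : ℝ) (x : Fin η → ℝ) (y : ℝ)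
    (hLB : LB < 0) (hUB : 0 < UB)
    (h1 : LB ≤ (∑ i, w i * x i) + b) (h2 : (∑ i, w i * x i) + b ≤ UB) :
    y = max 0 ((∑ i, w i * x i) + b) ↔
      ∃ σ : ℝ, (σ = 0 ∨ σ = 1) ∧
        y ≥ (∑ i, w i * x i) + b ∧
        y ≤ (∑ i, w i * x i) + b - (1 - σ) * LB ∧
        y ≤ σ * UB ∧
        y ≥ 0 := by
  generalize (∑ i, w i * x i) + b = t at *
  constructor
  · intro hy
    rcases le_total t 0 with ht | ht
    · rw [max_eq_left ht] at hy
      exact ⟨0, Or.inl rfl, by linarith, by linarith, by linarith, by linarith⟩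
    · rw [max_eq_right ht] at hy
      exact ⟨1, Or.inr rfl, by linarith, by linarith, by linarith, by linarith⟩
  · rintro ⟨σ, hσ | hσ, ha, hb, hc, hd⟩
    · subst hσ
      rw [max_eq_left (by linarith)]
      linarith
    · subst hσ
      rw [max_eq_right (by linarith)]
      linarith
end

section
/- In the Fourier–Motzkin elimination of zₙᵇ from the partitioned ReLU relaxation, every lower-bounding inequality on y of the form y ≥ Σ_{i∈I'_j} w_i x_i − σ Σ_{i∈I'_j} UB_i + (1−σ)(b + Σ_{i∈I∖I'_j} LB_i) is implied (for σ ∈ {0,1}) by the two inequalities y ≥ wᵀx + b and y ≥ 0, given that LB_i ≤ w_i x_i ≤ UB_i for all i. -/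
/-- Redundancy of the lower-bounding inequalities produced by Fourier–Motzkin
elimination in the partitioned ReLU relaxation (appendix A.2). -/
theorem stmt_7 (η : ℕ) (w : Fin η → ℝ) (b : ℝ) (LB UB : Fin η → ℝ)
    (x : Fin η → ℝ) (y σ : ℝ)
    (hσ : σ = 0 ∨ σ = 1)
    (hbounds : ∀ i, LB i ≤ w i * x i ∧ w i * x i ≤ UB i)
    (I' : Finset (Fin η))
    (h1 : y ≥ (∑ i, w i * x i) + b)
    (h2 : y ≥ 0) :
    y ≥ (∑ i ∈ I', w i * x i) - σ * (∑ i ∈ I', UB i)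
          + (1 - σ) * (b + ∑ i ∈ I'ᶜ, LB i) := by
  have hU : ∑ i ∈ I', w i * x i ≤ ∑ i ∈ I', UB i :=
    Finset.sum_le_sum fun i _ => (hbounds i).2
  have hL : ∑ i ∈ I'ᶜ, LB i ≤ ∑ i ∈ I'ᶜ, w i * x i :=
    Finset.sum_le_sum fun i _ => (hbounds i).1
  have hs := Finset.sum_add_sum_compl I' (fun i => w i * x i)
  rcases hσ with rfl | rfl <;> linarith
end
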